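/- arXiv:0712.3486 — 2 statements merged into one kernel-verified Lean document; each statement's English description precedes it below -/
import Mathlib

section
/- Let X be a separable Hilbert space, Λ ⊂ ℕ a Hadamard lacunary set, and f ∈ H²_Λ(𝔻, X) with (f̂(k))_{k≥0} a completely relatively compact sequence. Then X_*(f) = X_∞(f). -/
open scoped InnerProductSpace ENNReal
noncomputable section

/-- The Hardy space `H²(𝔻, X)` identified with `ℓ²(ℕ, X)`. -/
abbrev H2 (X : Type*) [NormedAddCommGroup X] [InnerProductSpace ℂ X] : Type _ :=
  lp (fun _ : ℕ => X) 2

variable {X : Type*} [NormedAddCommGroup X] [InnerProductSpace ℂ X]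

/-- The backward shift `S*` on `H²(𝔻, X)`. -/
def bshift (f : H2 X) : H2 X :=
  ⟨fun n => f (n + 1), by
    have h : Summable fun n : ℕ => ‖f n‖ ^ (2 : ℝ≥0∞).toReal :=
      (memℓp_gen_iff (by norm_num)).1 (lp.memℓp f)
    exact memℓp_gen ((summable_nat_add_iff 1).2 h)⟩

/-- `E_F`: the smallest closed `S*`-invariant subspace containing the family `F`. -/
def EF (F : Set (H2 X)) : Submodule ℂ (H2 X) :=
  (Submodule.span ℂ {g : H2 X | ∃ f ∈ F, ∃ n : ℕ, g = bshift^[n] f}).topologicalClosure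

/-- `E_f` for a single function. -/
def Ef (f : H2 X) : Submodule ℂ (H2 X) :=
  EF {f}

/-- `X_*(F) = ⋂_m closed-span {f̂(k) : k ≥ m, f ∈ F}`. -/
def XstarF (F : Set (H2 X)) : Submodule ℂ X :=
  ⨅ m : ℕ, (Submodule.span ℂ {x : X | ∃ f ∈ F, ∃ k ≥ m, x = f k}).topologicalClosure

def Xstar (f : H2 X) : Submodule ℂ X := XstarF {f}

/-- `P : X → X` is an orthogonal projection: idempotent and self-adjoint. -/
def IsOrthoProj {Y : Type*} [NormedAddCommGroup Y] [InnerProductSpace ℂ Y]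
    (P : Y →L[ℂ] Y) : Prop :=
  (∀ x, P (P x) = P x) ∧ ∀ x y, ⟪P x, y⟫_ℂ = ⟪x, P y⟫_ℂ

/-- A sequence in a Hilbert space is completely relatively compact if for every orthogonal
projection `P` the normalized sequence `{P aₖ / ‖P aₖ‖ : P aₖ ≠ 0}` is relatively compact. -/
def CRC {Y : Type*} [NormedAddCommGroup Y] [InnerProductSpace ℂ Y] (a : ℕ → Y) : Prop :=
  ∀ P : Y →L[ℂ] Y, IsOrthoProj P →
    IsCompact (closure {v : Y | ∃ k, P (a k) ≠ 0 ∧ v = ‖P (a k)‖⁻¹ • P (a k)})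

/-- A subset of `ℕ` is Hadamard lacunary. -/
def HadLac (Λ : Set ℕ) : Prop :=
  ∃ d : ℝ, 1 < d ∧ ∀ m ∈ Λ, ∀ n ∈ Λ, m < n → d * m ≤ n

/-- The Fourier spectrum. -/
def spec (f : H2 X) : Set ℕ := {k : ℕ | f k ≠ 0}

/-- `H²(𝔻, Y)` for a subspace `Y ⊆ X`, as a submodule of `H²(𝔻, X)`. -/
def H2sub (Y : Submodule ℂ X) : Submodule ℂ (H2 X) where
  carrier := {g : H2 X | ∀ n, g n ∈ Y}
  add_mem' := by
    intro a b ha hb n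
    have : (↑(a + b) : ∀ _ : ℕ, X) n = a n + b n := by
      rw [lp.coeFn_add]; rfl
    rw [this]
    exact Y.add_mem (ha n) (hb n)
  zero_mem' := by
    intro n
    have : (↑(0 : H2 X) : ∀ _ : ℕ, X) n = 0 := by rw [lp.coeFn_zero]; rfl
    rw [this]
    exact Y.zero_mem
  smul_mem' := by
    intro c a ha n
    have : (↑(c • a) : ∀ _ : ℕ, X) n = c • a n := by rw [lp.coeFn_smul]; rfl
    rw [this]
    exact Y.smul_mem c (ha n)

/-- A polynomial: finitely many nonzero Taylor coefficients. -/
def PolyH2 (f : H2 X) : Prop := {n : ℕ | f n ≠ 0}.Finite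


/-- `X_∞(f)`: the closed span of all closed subspaces `Y ⊆ X` with
`H²(𝔻, Y) ⊆ E_{S*^N f}` for every `N ≥ 0`. -/
def Xinf (f : H2 X) : Submodule ℂ X :=
  (Submodule.span ℂ {x : X | ∃ Y : Submodule ℂ X, IsClosed (Y : Set X) ∧
      (∀ N : ℕ, H2sub Y ≤ Ef (bshift^[N] f)) ∧ x ∈ Y}).topologicalClosure

/-- The smallest closed `S*^N`-invariant subspace containing `f`;
`f` is cyclic for `S*^N` iff this equals `⊤`. -/
def EfPow (f : H2 X) (N : ℕ) : Submodule ℂ (H2 X) :=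
  (Submodule.span ℂ {g : H2 X | ∃ k : ℕ, g = bshift^[N * k] f}).topologicalClosure


theorem bshift_iter_apply (f : H2 X) (n k : ℕ) : (bshift^[n] f) k = f (k + n) := by
  induction n generalizing f k with
  | zero => rfl
  | succ n ih =>
    rw [Function.iterate_succ_apply, ih]
    change f (k + n + 1) = _
    rfl

theorem H2_summable_sq (f : H2 X) : Summable fun n : ℕ => ‖f n‖ ^ 2 := by
  have h : Summable fun n : ℕ => ‖f n‖ ^ (2 : ℝ≥0∞).toReal :=
    (memℓp_gen_iff (by norm_num)).1 (lp.memℓp f)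
  simpa using h

/-- Bounded number of representations of `i + 1` as a difference of elements of `Λ`. -/
theorem lac_count (Λ : Set ℕ) (hΛ : HadLac Λ) :
    ∃ M : ℕ, ∀ i : ℕ, ∀ s : Finset ℕ, (∀ m ∈ s, m ∈ Λ ∧ m + i + 1 ∈ Λ) → s.card ≤ M := by
  obtain ⟨d, hd, h⟩ := hΛ
  have hl : 0 < Real.log d := Real.log_pos hd
  set C : ℝ := 1 + 1 / (d - 1) with hC
  have hd1 : 0 < d - 1 := by linarith
  have hCpos : 0 < C := by positivity
  refine ⟨(⌊Real.log C / Real.log d⌋ + 2).toNat, fun i s hs => ?_⟩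
  set φ : ℕ → ℤ := fun m => ⌊Real.log ((m + i + 1 : ℕ) : ℝ) / Real.log d⌋ with hφ
  set A : ℝ := Real.log ((i + 1 : ℕ) : ℝ) / Real.log d with hA
  have hmaps : ∀ m ∈ s, φ m ∈ Finset.Icc ⌊A⌋ (⌊A⌋ + ⌊Real.log C / Real.log d⌋ + 1) := by
    intro m hm
    obtain ⟨h1, h2⟩ := hs m hm
    have h3 := h m h1 _ h2 (by omega)
    rw [Finset.mem_Icc]
    constructor
    · apply Int.floor_le_floor
      apply div_le_div_of_nonneg_right _ hl.le
      apply Real.log_le_log (by positivity)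
      exact_mod_cast (by omega : i + 1 ≤ m + i + 1)
    · have h4 : ((m + i + 1 : ℕ) : ℝ) ≤ ((i + 1 : ℕ) : ℝ) * C := by
        push_cast at h3 ⊢
        have : (m : ℝ) ≤ (i + 1) * (1 / (d - 1)) := by
          rw [mul_one_div, le_div_iff₀ hd1]; nlinarith
        rw [hC]; nlinarith
      have h5 : Real.log ((m + i + 1 : ℕ) : ℝ) / Real.log d ≤ A + Real.log C / Real.log d := by
        rw [hA, ← add_div]
        apply div_le_div_of_nonneg_right _ hl.le
        rw [← Real.log_mul (by positivity) hCpos.ne']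
        exact Real.log_le_log (by positivity) h4
      have h6 : φ m < ⌊A⌋ + ⌊Real.log C / Real.log d⌋ + 2 := by
        simp only [hφ]
        rw [Int.floor_lt, Int.cast_add, Int.cast_add, Int.cast_ofNat]
        have := Int.lt_floor_add_one A
        have := Int.lt_floor_add_one (Real.log C / Real.log d)
        linarith
      omega
  have hlt : ∀ m ∈ s, ∀ n ∈ s, m < n → φ m < φ n := by
    intro m hm n hn hmn
    have h3 := h _ (hs m hm).2 _ (hs n hn).2 (by omega)
    have h4 : Real.log ((m + i + 1 : ℕ) : ℝ) / Real.log d + 1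
        ≤ Real.log ((n + i + 1 : ℕ) : ℝ) / Real.log d := by
      rw [div_add_one hl.ne']
      apply div_le_div_of_nonneg_right _ hl.le
      rw [add_comm, ← Real.log_mul (by linarith) (by positivity)]
      exact Real.log_le_log (by positivity) h3
    have := Int.floor_le_floor h4
    rw [Int.floor_add_one] at this
    simp only [hφ]
    omega
  have hinj : Set.InjOn φ s := by
    intro m hm n hn he
    rcases lt_trichotomy m n with hh | hh | hh
    · exact absurd he (hlt m hm n hn hh).ne
    · exact hh
    · exact absurd he (hlt n hn m hm hh).ne'
  have := Finset.card_le_card_of_injOn φ hmaps hinj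
  rw [Int.card_Icc] at this
  refine this.trans (le_of_eq ?_)
  congr 1
  ring

/-- Off-diagonal weights are summable. -/
theorem lac_weights (Λ : Set ℕ) (hΛ : HadLac Λ) (q : ℕ → ℝ) (hq0 : ∀ i, 0 ≤ q i)
    (hq : Summable q) :
    ∃ G : ℕ → ℝ, Summable G ∧ (∀ m, 0 ≤ G m) ∧
      ∀ m ∈ Λ, ∀ s : Finset ℕ, (∀ i ∈ s, m + i + 1 ∈ Λ) → ∑ i ∈ s, q i ≤ G m := by
  classical
  obtain ⟨M, hM⟩ := lac_count Λ hΛ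
  set F : ℕ × ℕ → ℝ := fun x => if x.2 ∈ Λ ∧ x.2 + x.1 + 1 ∈ Λ then q x.1 else 0 with hF
  have hF0 : 0 ≤ F := by
    intro x
    simp only [hF, Pi.zero_apply]
    split_ifs
    · exact hq0 _
    · exact le_rfl
  have hbd : ∀ i, ∀ s : Finset ℕ, ∑ m ∈ s, F (i, m) ≤ M * q i := by
    intro i s
    simp only [hF]
    rw [← Finset.sum_filter, Finset.sum_const, nsmul_eq_mul]
    apply mul_le_mul_of_nonneg_right _ (hq0 i)
    exact_mod_cast hM i _ (fun m hm => (Finset.mem_filter.1 hm).2)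
  have hFs : Summable F := by
    rw [summable_prod_of_nonneg hF0]
    have h1 : ∀ i, Summable fun m => F (i, m) := fun i =>
      summable_of_sum_le (fun m => hF0 _) (hbd i)
    refine ⟨h1, Summable.of_nonneg_of_le (fun i => tsum_nonneg fun m => hF0 _) ?_ (hq.mul_left (M : ℝ))⟩
    intro i
    exact (h1 i).tsum_le_of_sum_le (hbd i)
  have hF' : Summable (F ∘ Prod.swap) := (Equiv.prodComm ℕ ℕ).summable_iff.2 hFs
  have hF'' := (summable_prod_of_nonneg (f := F ∘ Prod.swap) (fun x => hF0 x.swap)).1 hF'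
  refine ⟨fun m => ∑' i, F (i, m), hF''.2, fun m => tsum_nonneg fun i => hF0 _, ?_⟩
  intro m hm s hs
  refine le_trans (le_of_eq ?_) ((hF''.1 m).sum_le_tsum s (fun i _ => hF0 _))
  apply Finset.sum_congr rfl
  intro i hi
  simp [hF, hm, hs i hi]

theorem key_bound (Λ : Set ℕ) (hΛ : HadLac Λ) (u g : ℕ → X)
    (hu : Summable fun n => ‖u n‖ ^ 2) (hg : Summable fun n => ‖g n‖ ^ 2)
    (huΛ : ∀ n, u n ≠ 0 → n ∈ Λ) (N p : ℕ)
    (horth : ∀ n ≥ N, HasSum (fun j => ⟪g j, u (j + n)⟫_ℂ) 0) :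
    ∃ G : ℕ → ℝ, Summable G ∧ (∀ m, 0 ≤ G m) ∧ ∃ M₀ : ℕ, ∀ m ≥ M₀,
      ‖⟪g p, u m⟫_ℂ‖ ^ 2 ≤ G m * ∑' l, ‖u (l + (m + 1))‖ ^ 2 := by
  classical
  obtain ⟨G, hG, hG0, hGb⟩ := lac_weights Λ hΛ (fun i => ‖g (i + (p + 1))‖ ^ 2)
    (fun i => by positivity) ((summable_nat_add_iff (f := fun n => ‖g n‖ ^ 2) (p + 1)).2 hg)
  obtain ⟨d, hd, hdl⟩ := hΛ
  have hd1 : 0 < d - 1 := by linarith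
  obtain ⟨M₁, hM₁⟩ := exists_nat_gt (d * p / (d - 1))
  refine ⟨G, hG, hG0, N + p + M₁, fun m hm => ?_⟩
  have hB0 : 0 ≤ ∑' l, ‖u (l + (m + 1))‖ ^ 2 := tsum_nonneg fun l => by positivity
  by_cases hum : u m = 0
  · rw [hum, inner_zero_right, norm_zero]
    have := mul_nonneg (hG0 m) hB0
    simpa using this
  have hmΛ := huΛ m hum
  have h0 := horth (m - p) (by omega)
  have h1 := (hasSum_nat_add_iff' (p + 1)).2 h0
  have hz : ∑ j ∈ Finset.range p, ⟪g j, u (j + (m - p))⟫_ℂ = 0 := by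
    apply Finset.sum_eq_zero
    intro j hj
    rw [Finset.mem_range] at hj
    by_contra hne
    have hne' : u (j + (m - p)) ≠ 0 := by
      intro h; rw [h, inner_zero_right] at hne; exact hne rfl
    have h2 := hdl _ (huΛ _ hne') _ hmΛ (by omega)
    have h3 : (m : ℝ) - p ≤ ((j + (m - p) : ℕ) : ℝ) := by
      have : m ≤ (j + (m - p)) + p := by omega
      have : (m : ℝ) ≤ ((j + (m - p) : ℕ) : ℝ) + p := by exact_mod_cast this
      linarith
    rw [div_lt_iff₀ hd1] at hM₁
    have h4 : (M₁ : ℝ) ≤ m := by exact_mod_cast (by omega : M₁ ≤ m)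
    nlinarith
  rw [Finset.sum_range_succ, hz, zero_add, zero_sub, show p + (m - p) = m by omega] at h1
  have h2 : Filter.Tendsto (fun s : Finset ℕ => ‖∑ i ∈ s,
      ⟪g (i + (p + 1)), u (i + (p + 1) + (m - p))⟫_ℂ‖ ^ 2) Filter.atTop
      (nhds (‖-⟪g p, u m⟫_ℂ‖ ^ 2)) := (Filter.Tendsto.norm h1).pow 2
  rw [norm_neg] at h2
  refine le_of_tendsto' h2 fun s => ?_
  set t := s.filter (fun i => m + i + 1 ∈ Λ) with ht
  have hst : ∑ i ∈ s, ⟪g (i + (p + 1)), u (i + (p + 1) + (m - p))⟫_ℂ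
      = ∑ i ∈ t, ⟪g (i + (p + 1)), u (i + (m + 1))⟫_ℂ := by
    rw [ht, Finset.sum_filter]
    apply Finset.sum_congr rfl
    intro i _
    rw [show i + (p + 1) + (m - p) = i + (m + 1) by omega]
    split_ifs with hi
    · rfl
    · have : u (i + (m + 1)) = 0 := by
        by_contra hne
        apply hi
        have := huΛ _ hne
        rwa [show i + (m + 1) = m + i + 1 by omega] at this
      rw [this, inner_zero_right]
  rw [hst]
  calc ‖∑ i ∈ t, ⟪g (i + (p + 1)), u (i + (m + 1))⟫_ℂ‖ ^ 2
      ≤ (∑ i ∈ t, ‖g (i + (p + 1))‖ * ‖u (i + (m + 1))‖) ^ 2 := by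
        apply pow_le_pow_left₀ (norm_nonneg _)
        exact (norm_sum_le _ _).trans (Finset.sum_le_sum fun i _ => norm_inner_le_norm _ _)
    _ ≤ (∑ i ∈ t, ‖g (i + (p + 1))‖ ^ 2) * ∑ i ∈ t, ‖u (i + (m + 1))‖ ^ 2 :=
        Finset.sum_mul_sq_le_sq_mul_sq _ _ _
    _ ≤ _ := by
        apply mul_le_mul
        · exact hGb m hmΛ t (fun i hi => (Finset.mem_filter.1 hi).2)
        · exact ((summable_nat_add_iff (m + 1)).2 hu).sum_le_tsum t (fun i _ => by positivity)
        · exact Finset.sum_nonneg fun i _ => by positivity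
        · exact hG0 m

theorem tail_zero (b G : ℕ → ℝ) (hb0 : ∀ n, 0 ≤ b n) (hb : Summable b) (hG : Summable G)
    (hG0 : ∀ n, 0 ≤ G n) (M₀ : ℕ) (h : ∀ m ≥ M₀, b m ≤ G m * ∑' l, b (l + (m + 1))) :
    ∀ m ≥ M₀, b m = 0 := by
  set B : ℕ → ℝ := fun m => ∑' l, b (l + m) with hB
  have hB0 : ∀ m, 0 ≤ B m := fun m => tsum_nonneg fun l => hb0 _
  have hstep : ∀ m, B m = b m + B (m + 1) := by
    intro m
    have := ((summable_nat_add_iff m).2 hb).tsum_eq_zero_add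
    simp only [hB]
    rw [this, zero_add]
    congr 2
    ext l
    congr 1
    omega
  have h1 : ∀ m ≥ M₀, B m ≤ Real.exp (G m) * B (m + 1) := by
    intro m hm
    have := h m hm
    have h2 := Real.add_one_le_exp (G m)
    have h3 := mul_le_mul_of_nonneg_right h2 (hB0 (m + 1))
    rw [hstep m]
    change b m ≤ G m * B (m + 1) at this
    linarith
  have h2 : ∀ m ≥ M₀, ∀ r, B m ≤ Real.exp (∑ i ∈ Finset.range r, G (i + m)) * B (r + m) := by
    intro m hm r
    induction r with
    | zero => simp
    | succ r ih =>
      refine ih.trans ?_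
      rw [Finset.sum_range_succ, Real.exp_add, mul_assoc]
      apply mul_le_mul_of_nonneg_left _ (Real.exp_pos _).le
      have := h1 (r + m) (by omega)
      rwa [show r + 1 + m = r + m + 1 by omega]
  intro m hm
  have h3 : ∀ r, B m ≤ Real.exp (∑' i, G (i + m)) * B (r + m) := by
    intro r
    refine (h2 m hm r).trans (mul_le_mul_of_nonneg_right (Real.exp_le_exp.2 ?_) (hB0 _))
    exact ((summable_nat_add_iff m).2 hG).sum_le_tsum _ (fun i _ => hG0 _)
  have h4 : Filter.Tendsto (fun r => Real.exp (∑' i, G (i + m)) * B (r + m)) Filter.atTop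
      (nhds 0) := by
    have := (tendsto_sum_nat_add b).comp (Filter.tendsto_add_atTop_nat m)
    simpa using this.const_mul (Real.exp (∑' i, G (i + m)))
  have h5 : B m ≤ 0 := ge_of_tendsto' h4 h3
  have := hstep m
  have := hB0 (m + 1)
  have := hb0 m
  linarith

theorem mem_Ef_orth {f g : H2 X} {N : ℕ} (hg : g ∈ (Ef (bshift^[N] f))ᗮ) (n : ℕ) (hn : N ≤ n) :
    HasSum (fun j => ⟪g j, f (j + n)⟫_ℂ) 0 := by
  have hmem : bshift^[n] f ∈ Ef (bshift^[N] f) := by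
    apply Submodule.le_topologicalClosure
    apply Submodule.subset_span
    refine ⟨_, rfl, n - N, ?_⟩
    rw [← Function.iterate_add_apply]
    congr 1
    congr 1
    omega
  have h := lp.hasSum_inner (𝕜 := ℂ) g (bshift^[n] f)
  rw [Submodule.inner_left_of_mem_orthogonal hmem hg] at h
  simpa only [bshift_iter_apply] using h

theorem Xinf_le_Xstar (f : H2 X) : Xinf f ≤ Xstar f := by
  have hcl : IsClosed ((Xstar f : Submodule ℂ X) : Set X) := by
    unfold Xstar XstarF
    rw [Submodule.coe_iInf]
    exact isClosed_iInter fun m => Submodule.isClosed_topologicalClosure _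
  refine Submodule.topologicalClosure_minimal _ (Submodule.span_le.2 ?_) hcl
  rintro x ⟨Y, -, hY, hx⟩
  change x ∈ Xstar f
  unfold Xstar XstarF
  rw [Submodule.mem_iInf]
  intro m
  set Z := (Submodule.span ℂ {x : X | ∃ g ∈ ({f} : Set (H2 X)), ∃ k ≥ m, x = g k}).topologicalClosure
    with hZ
  have hZc : IsClosed (Z : Set X) := Submodule.isClosed_topologicalClosure _
  have hcont : Continuous fun g : H2 X => g 0 := (lp.evalCLM ℂ (fun _ : ℕ => X) 2 0).continuous
  have hle : ∀ g ∈ Ef (bshift^[m] f), g 0 ∈ Z := by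
    have : Ef (bshift^[m] f) ≤ Z.comap (lp.evalCLM ℂ (fun _ : ℕ => X) 2 0 : H2 X →L[ℂ] X).toLinearMap := by
      refine Submodule.topologicalClosure_minimal _ (Submodule.span_le.2 ?_) (hZc.preimage hcont)
      rintro g ⟨h, rfl, n, rfl⟩
      change (bshift^[n] (bshift^[m] f)) 0 ∈ Z
      rw [bshift_iter_apply, bshift_iter_apply]
      exact Submodule.le_topologicalClosure _ (Submodule.subset_span ⟨f, rfl, _, by omega, rfl⟩)
    exact fun g hg => this hg
  have := hle (lp.single 2 0 x) (hY m (by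
    intro n
    rw [lp.single_apply]
    by_cases hn : n = 0
    · subst hn; simpa using hx
    · simp [Pi.single_apply, hn]))
  simpa using this

theorem tail_orth [CompleteSpace X] (Λ : Set ℕ) (hΛ : HadLac Λ)
    (f : H2 X) (hspec : spec f ⊆ Λ) (hcrc : CRC fun k : ℕ => f k) (N : ℕ) :
    ∃ M₀ : ℕ, ∀ m ≥ M₀, ∀ g ∈ (Ef (bshift^[N] f))ᗮ, ∀ p, ⟪g p, f m⟫_ℂ = 0 := by
  set T : Set X := {x | ∃ g ∈ (Ef (bshift^[N] f))ᗮ, ∃ p : ℕ, x = g p} with hT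
  set W : Submodule ℂ X := (Submodule.span ℂ T).topologicalClosure with hW
  have hWc : IsClosed (W : Set X) := Submodule.isClosed_topologicalClosure _
  haveI : CompleteSpace W := hWc.completeSpace_coe
  set Q : X →L[ℂ] X := W.starProjection with hQ
  have hTW : ∀ x ∈ T, x ∈ W := fun x hx =>
    Submodule.le_topologicalClosure _ (Submodule.subset_span hx)
  have hQsa : ∀ x y, ⟪Q x, y⟫_ℂ = ⟪x, Q y⟫_ℂ := fun x y =>
    Submodule.inner_starProjection_left_eq_right W x y
  have hQfix : ∀ x ∈ W, Q x = x := fun x hx => Submodule.starProjection_eq_self_iff.2 hx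
  have hQmem : ∀ x, Q x ∈ W := fun x => Submodule.starProjection_apply_mem W x
  have hQp : IsOrthoProj Q := ⟨fun x => hQfix _ (hQmem x), hQsa⟩
  have hQin : ∀ g ∈ (Ef (bshift^[N] f))ᗮ, ∀ p n, ⟪g p, f n⟫_ℂ = ⟪g p, Q (f n)⟫_ℂ := by
    intro g hg p n
    rw [← hQsa, hQfix _ (hTW _ ⟨g, hg, p, rfl⟩)]
  set u : ℕ → X := fun n => Q (f n) with hu
  have husum : Summable fun n => ‖u n‖ ^ 2 := by
    refine Summable.of_nonneg_of_le (fun n => by positivity) (fun n => ?_) (H2_summable_sq f)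
    exact pow_le_pow_left₀ (norm_nonneg _) (Submodule.norm_starProjection_apply_le W (f n)) 2
  have huΛ : ∀ n, u n ≠ 0 → n ∈ Λ := by
    intro n hn
    apply hspec
    intro h0
    apply hn
    simp only [hu]
    rw [h0, map_zero]
  have hK := hcrc Q hQp
  set S : Set X := {v : X | ∃ k, Q (f k) ≠ 0 ∧ v = ‖Q (f k)‖⁻¹ • Q (f k)} with hS
  have hSW : ∀ v ∈ closure S, v ∈ W ∧ ‖v‖ = 1 := by
    have hc : IsClosed {v : X | v ∈ W ∧ ‖v‖ = 1} :=
      hWc.inter (isClosed_eq continuous_norm continuous_const)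
    apply closure_minimal _ hc
    rintro v ⟨k, hk, rfl⟩
    refine ⟨?_, ?_⟩
    · rw [← Complex.coe_smul]
      exact W.smul_mem _ (hQmem _)
    · rw [norm_smul, norm_inv, norm_norm]
      exact inv_mul_cancel₀ (norm_ne_zero_iff.2 hk)
  have hmain : ∃ G : ℕ → ℝ, Summable G ∧ (∀ m, 0 ≤ G m) ∧ ∃ M₀ : ℕ, ∀ m ≥ M₀, u m ≠ 0 →
      ‖u m‖⁻¹ • u m ∈ closure S → ‖u m‖ ^ 2 ≤ G m * ∑' l, ‖u (l + (m + 1))‖ ^ 2 := by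
    refine hK.induction_on (p := fun A => ∃ G : ℕ → ℝ, Summable G ∧ (∀ m, 0 ≤ G m) ∧
      ∃ M₀ : ℕ, ∀ m ≥ M₀, u m ≠ 0 →
      ‖u m‖⁻¹ • u m ∈ A → ‖u m‖ ^ 2 ≤ G m * ∑' l, ‖u (l + (m + 1))‖ ^ 2) ?_ ?_ ?_ ?_
    · exact ⟨fun _ => 0, summable_zero, fun _ => le_rfl, 0, fun m _ _ h => absurd h (by simp)⟩
    · rintro A A' hAA ⟨G, h1, h2, M₀, h3⟩
      exact ⟨G, h1, h2, M₀, fun m hm h0 h => h3 m hm h0 (hAA h)⟩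
    · rintro A A' ⟨G, h1, h2, M₀, h3⟩ ⟨G', h1', h2', M₀', h3'⟩
      refine ⟨fun m => G m + G' m, h1.add h1', fun m => add_nonneg (h2 m) (h2' m),
        M₀ + M₀', fun m hm h0 h => ?_⟩
      have hB0 : 0 ≤ ∑' l, ‖u (l + (m + 1))‖ ^ 2 := tsum_nonneg fun l => by positivity
      rw [add_mul]
      have e1 := mul_nonneg (h2 m) hB0
      have e2 := mul_nonneg (h2' m) hB0
      rcases h with h | h
      · have := h3 m (by omega) h0 h; linarith
      · have := h3' m (by omega) h0 h; linarith
    · intro v hv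
      obtain ⟨hvW, hv1⟩ := hSW v hv
      have hex : ∃ g ∈ (Ef (bshift^[N] f))ᗮ, ∃ p : ℕ, ⟪g p, v⟫_ℂ ≠ 0 := by
        by_contra! hcon
        have hle : W ≤ (Submodule.span ℂ {v})ᗮ := by
          refine Submodule.topologicalClosure_minimal _ (Submodule.span_le.2 ?_)
            (Submodule.isClosed_orthogonal _)
          rintro x ⟨g, hg, p, rfl⟩
          rw [SetLike.mem_coe, Submodule.mem_orthogonal_singleton_iff_inner_left]
          exact hcon g hg p
        have := hle hvW
        rw [Submodule.mem_orthogonal_singleton_iff_inner_left, inner_self_eq_zero] at this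
        rw [this, norm_zero] at hv1
        exact zero_ne_one hv1
      obtain ⟨g, hg, p, hgp⟩ := hex
      obtain ⟨G, h1, h2, M₀, h3⟩ := key_bound Λ hΛ u (fun n => g n) husum (H2_summable_sq g) huΛ N p
        (by
          intro n hn
          have := mem_Ef_orth hg n hn
          simpa only [hQin g hg] using this)
      set c : ℝ := ‖⟪g p, v⟫_ℂ‖ / 2 with hc
      have hcpos : 0 < c := by
        have := norm_pos_iff.2 hgp
        positivity
      have hcont : Continuous fun w : X => ‖⟪g p, w⟫_ℂ‖ := by fun_prop
      have hopen : {w : X | c < ‖⟪g p, w⟫_ℂ‖} ∈ nhds v :=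
        (isOpen_lt continuous_const hcont).mem_nhds (by
          change c < ‖⟪g p, v⟫_ℂ‖
          linarith)
      refine ⟨_, mem_nhdsWithin_of_mem_nhds hopen, fun m => (c ^ 2)⁻¹ * G m, h1.mul_left _,
        fun m => mul_nonneg (by positivity) (h2 m), M₀, fun m hm h0 h => ?_⟩
      have hpos := norm_pos_iff.2 h0
      change c < ‖⟪g p, ‖u m‖⁻¹ • u m⟫_ℂ‖ at h
      rw [inner_smul_right_eq_smul, norm_smul, norm_inv, norm_norm, inv_mul_eq_div,
        lt_div_iff₀ hpos] at h
      have h4 := h3 m hm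
      have h5 : (c * ‖u m‖) ^ 2 ≤ ‖⟪g p, u m⟫_ℂ‖ ^ 2 :=
        pow_le_pow_left₀ (by positivity) h.le 2
      rw [mul_assoc, inv_mul_eq_div, le_div_iff₀ (by positivity)]
      nlinarith
  obtain ⟨G, h1, h2, M₀, h3⟩ := hmain
  have hz := tail_zero (fun n => ‖u n‖ ^ 2) G (fun n => by positivity) husum h1 h2 M₀ (by
    intro m hm
    by_cases h0 : u m = 0
    · have hB0 : 0 ≤ ∑' l, ‖u (l + (m + 1))‖ ^ 2 := tsum_nonneg fun l => by positivity
      have := mul_nonneg (h2 m) hB0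
      simpa [h0] using this
    · exact h3 m hm h0 (subset_closure ⟨m, h0, rfl⟩))
  refine ⟨M₀, fun m hm g hg p => ?_⟩
  have h0 : u m = 0 := by simpa using hz m hm
  rw [hQin g hg]
  change ⟪g p, u m⟫_ℂ = 0
  rw [h0, inner_zero_right]

theorem H2sub_Xstar_le [CompleteSpace X] (Λ : Set ℕ) (hΛ : HadLac Λ)
    (f : H2 X) (hspec : spec f ⊆ Λ) (hcrc : CRC fun k : ℕ => f k) (N : ℕ) :
    H2sub (Xstar f) ≤ Ef (bshift^[N] f) := by
  obtain ⟨M₀, hM⟩ := tail_orth Λ hΛ f hspec hcrc N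
  intro h hh
  have hcl : IsClosed ((Ef (bshift^[N] f) : Submodule ℂ (H2 X)) : Set (H2 X)) :=
    Submodule.isClosed_topologicalClosure _
  haveI : CompleteSpace (Ef (bshift^[N] f)) := hcl.completeSpace_coe
  rw [← Submodule.orthogonal_orthogonal (Ef (bshift^[N] f)), Submodule.mem_orthogonal]
  intro g hg
  rw [lp.inner_eq_tsum]
  have : ∀ n, ⟪g n, h n⟫_ℂ = 0 := by
    intro n
    have hle : Xstar f ≤ (Submodule.span ℂ {(g n : X)})ᗮ := by
      refine (iInf_le _ M₀).trans ?_
      refine Submodule.topologicalClosure_minimal _ (Submodule.span_le.2 ?_)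
            (Submodule.isClosed_orthogonal _)
      rintro x ⟨f', rfl, k, hk, rfl⟩
      rw [SetLike.mem_coe, Submodule.mem_orthogonal_singleton_iff_inner_right]
      exact hM k hk g hg n
    exact Submodule.mem_orthogonal_singleton_iff_inner_right.1 (hle (hh n))
  simp [this]

/-- For a lacunary series with c.r.c. coefficient sequence, `X_*(f) = X_∞(f)`. -/
theorem Xstar_eq_Xinf {X : Type*} [NormedAddCommGroup X] [InnerProductSpace ℂ X] [CompleteSpace X]
    [TopologicalSpace.SeparableSpace X]
    (Λ : Set ℕ) (hΛ : HadLac Λ)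
    (f : H2 X) (hspec : spec f ⊆ Λ) (hcrc : CRC fun k : ℕ => f k) :
    Xstar f = Xinf f := by
  apply le_antisymm _ (Xinf_le_Xstar f)
  intro x hx
  apply Submodule.le_topologicalClosure
  apply Submodule.subset_span
  refine ⟨Xstar f, ?_, H2sub_Xstar_le Λ hΛ f hspec hcrc, hx⟩
  unfold Xstar XstarF
  rw [Submodule.coe_iInf]
  exact isClosed_iInter fun m => Submodule.isClosed_topologicalClosure _

end
end

section
/- Let X be a separable Hilbert space, N ≥ 1 an integer, Λ ⊂ ℕ an infinite Hadamard lacunary set, and f ∈ H²_Λ(𝔻, X) with (f̂(k))_{k≥0} completely relatively compact in X. Then f is cyclic for the operator S*^N on H²(𝔻, X) if and only if for every m ≥ 0 the closed linear span in X^N of the vectors (f̂(Nk), f̂(Nk+1), …, f̂(Nk+N−1)) over all k ≥ m equals X^N, where X^N is the N-fold Hilbert direct sum of X. -/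
open scoped InnerProductSpace ENNReal
noncomputable section

variable {X : Type*} [NormedAddCommGroup X] [InnerProductSpace ℂ X]

theorem enn_cs (a b : ℕ → ℝ≥0∞) : (∑' i, a i * b i) ^ 2 ≤ (∑' i, a i ^ 2) * ∑' i, b i ^ 2 := by
  have h := ENNReal.lintegral_mul_le_Lp_mul_Lq (MeasureTheory.Measure.count : MeasureTheory.Measure ℕ)
    Real.HolderConjugate.two_two (f := a) (g := b)
    (measurable_of_countable _).aemeasurable (measurable_of_countable _).aemeasurable
  simp only [MeasureTheory.lintegral_count, Pi.mul_apply, ENNReal.rpow_two] at h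
  calc (∑' i, a i * b i) ^ 2 ≤ ((∑' i, a i ^ 2) ^ (1 / 2 : ℝ) * (∑' i, b i ^ 2) ^ (1 / 2 : ℝ)) ^ 2 := by
        gcongr
    _ = _ := by
        rw [mul_pow, ← ENNReal.rpow_natCast, ← ENNReal.rpow_natCast, ← ENNReal.rpow_mul,
          ← ENNReal.rpow_mul]
        norm_num

theorem lac_pow {Λ : Set ℕ} {δ : ℝ} (hδ : 1 < δ)
    (h : ∀ m ∈ Λ, ∀ n ∈ Λ, m < n → δ * m ≤ n) (d : ℕ) :
    ∀ (r : ℕ) (s : Finset ℕ), s.card = r + 1 → (∀ x ∈ s, x ∈ Λ ∧ d ≤ x) →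
      ∃ x ∈ s, δ ^ r * d ≤ (x : ℝ) := by
  intro r
  induction r with
  | zero =>
    intro s hs hx
    obtain ⟨x, hxs⟩ := Finset.card_pos.1 (by omega : 0 < s.card)
    exact ⟨x, hxs, by simpa using (hx x hxs).2⟩
  | succ r ih =>
    intro s hs hx
    have hne : s.Nonempty := Finset.card_pos.1 (by omega)
    have hM := Finset.max'_mem s hne
    obtain ⟨x, hxs, hle⟩ := ih (s.erase (s.max' hne)) (by
      rw [Finset.card_erase_of_mem hM]; omega) (fun x hx' => hx x (Finset.mem_of_mem_erase hx'))
    refine ⟨_, hM, ?_⟩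
    have h1 : x < s.max' hne := lt_of_le_of_ne (Finset.le_max' s x (Finset.mem_of_mem_erase hxs))
      (Finset.ne_of_mem_erase hxs)
    have h2 := h x (hx x (Finset.mem_of_mem_erase hxs)).1 _ (hx _ hM).1 h1
    calc δ ^ (r + 1) * d = δ * (δ ^ r * d) := by ring
      _ ≤ δ * x := by gcongr
      _ ≤ _ := h2

open Classical in
theorem lac_count_s12 {Λ : Set ℕ} (hΛ : HadLac Λ) :
    ∃ R : ℕ, ∀ d : ℕ, 0 < d →
      ∑' n : ℕ, (if n ∈ Λ ∧ n + d ∈ Λ then (1 : ℝ≥0∞) else 0) ≤ R := by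
  obtain ⟨δ, hδ, h⟩ := hΛ
  obtain ⟨R, hR⟩ := pow_unbounded_of_one_lt (δ / (δ - 1)) hδ
  refine ⟨R, fun d hd => ?_⟩
  rw [ENNReal.tsum_eq_iSup_sum]
  refine iSup_le fun s => ?_
  rw [← Finset.sum_filter, Finset.sum_const, nsmul_eq_mul, mul_one]
  norm_cast
  by_contra hcon
  push Not at hcon
  obtain ⟨t, hts, htc⟩ := Finset.exists_subset_card_eq (Nat.succ_le_of_lt hcon)
  obtain ⟨x, hxt, hx⟩ := lac_pow hδ h d R (t.image (· + d))
    (by rw [Finset.card_image_of_injective _ (add_left_injective d)]; exact htc)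
    (by
      intro x hx
      obtain ⟨y, hy, rfl⟩ := Finset.mem_image.1 hx
      exact ⟨(Finset.mem_filter.1 (hts hy)).2.2, by simp⟩)
  obtain ⟨y, hy, rfl⟩ := Finset.mem_image.1 hxt
  have hy' := (Finset.mem_filter.1 (hts hy)).2
  have h3 := h y hy'.1 _ hy'.2 (by omega)
  push_cast at h3 hx
  have hd' : (0 : ℝ) < d := by exact_mod_cast hd
  have hδ1 : 0 < δ - 1 := by linarith
  rw [div_lt_iff₀ hδ1] at hR
  have : δ * d < δ ^ R * (δ - 1) * d := by gcongr
  nlinarith [mul_le_mul_of_nonneg_right hx hδ1.le]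

open Classical in
/-- The pair sum over a lacunary set is finite. -/
theorem lac_pair {Λ : Set ℕ} (hΛ : HadLac Λ) (w : ℕ → ℝ≥0∞) (hw : ∑' d, w d ≠ ∞) :
    ∑' n : ℕ, ∑' d : ℕ, (if n ∈ Λ ∧ n + (d + 1) ∈ Λ then w d else 0) ≠ ∞ := by
  obtain ⟨R, hR⟩ := lac_count_s12 hΛ
  rw [ENNReal.tsum_comm]
  refine ne_top_of_le_ne_top (ENNReal.mul_ne_top (ENNReal.natCast_ne_top R) hw) ?_
  rw [← ENNReal.tsum_mul_left]
  refine ENNReal.tsum_le_tsum fun d => ?_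
  calc ∑' n : ℕ, (if n ∈ Λ ∧ n + (d + 1) ∈ Λ then w d else 0)
      = ∑' n : ℕ, (if n ∈ Λ ∧ n + (d + 1) ∈ Λ then (1 : ℝ≥0∞) else 0) * w d := by
        refine tsum_congr fun n => ?_
        split_ifs <;> simp
    _ = (∑' n : ℕ, (if n ∈ Λ ∧ n + (d + 1) ∈ Λ then (1 : ℝ≥0∞) else 0)) * w d :=
        ENNReal.tsum_mul_right
    _ ≤ R * w d := by gcongr; exact hR _ (Nat.succ_pos d)

theorem lac_gap {Λ : Set ℕ} (hΛ : HadLac Λ) (L : ℕ) :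
    ∃ m : ℕ, ∀ n ∈ Λ, m ≤ n → ∀ n' ∈ Λ, n' < n → n' + L < n := by
  obtain ⟨δ, hδ, h⟩ := hΛ
  have hδ1 : 0 < δ - 1 := by linarith
  obtain ⟨m, hm⟩ := exists_nat_gt (δ * L / (δ - 1))
  refine ⟨m, fun n hn hmn n' hn' hlt => ?_⟩
  have h1 := h n' hn' n hn hlt
  rw [div_lt_iff₀ hδ1] at hm
  have hmn' : (m : ℝ) ≤ n := by exact_mod_cast hmn
  have h2 : δ * ((n' : ℝ) + L) < δ * n := by nlinarith
  have h3 := lt_of_mul_lt_mul_left h2 (by linarith)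
  exact_mod_cast h3

theorem bshift_iter (f : H2 X) (k n : ℕ) : (bshift^[k] f) n = f (n + k) := by
  induction k generalizing n with
  | zero => rfl
  | succ k ih =>
    rw [Function.iterate_succ_apply']
    change (bshift^[k] f) (n + 1) = _
    rw [ih, show n + 1 + k = n + (k + 1) by ring]

theorem h2_enn (f : H2 X) : ∑' n, ‖f n‖ₑ ^ 2 ≠ ∞ := by
  have h : Summable fun n : ℕ => ‖f n‖ ^ (2 : ℝ≥0∞).toReal :=
    (memℓp_gen_iff (by norm_num)).1 (lp.memℓp f)
  have h' : Summable fun n : ℕ => ‖f n‖ ^ 2 := by simpa using h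
  have h3 : Summable fun n : ℕ => ‖f n‖₊ ^ 2 := by
    rw [← NNReal.summable_coe]; simpa using h'
  have := ENNReal.tsum_coe_ne_top_iff_summable.2 h3
  simpa [enorm_eq_nnnorm] using this

/-- Compactness step. -/
theorem compact_step [CompleteSpace X] (a : ℕ → X) (hcrc : CRC a) (S : Set ℕ) (g : ℕ → X) :
    ∃ (C : ℝ) (I : Finset ℕ), 0 ≤ C ∧ (∀ i ∈ I, i ∈ S) ∧ ∀ k,
      ‖(Submodule.span ℂ (g '' S)).topologicalClosure.starProjection (a k)‖ ^ 2 ≤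
        C * ∑ i ∈ I, ‖⟪g i, a k⟫_ℂ‖ ^ 2 := by
  set U := (Submodule.span ℂ (g '' S)).topologicalClosure with hU
  set P := U.starProjection with hP
  have hgU : ∀ i ∈ S, g i ∈ U := fun i hi =>
    Submodule.le_topologicalClosure _ (Submodule.subset_span ⟨i, hi, rfl⟩)
  have hsym : ∀ x y, ⟪P x, y⟫_ℂ = ⟪x, P y⟫_ℂ := fun x y => U.starProjection_isSymmetric x y
  have hK := hcrc P ⟨fun x => Submodule.starProjection_eq_self_iff.2
    (Submodule.starProjection_apply_mem _ _), hsym⟩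
  set K := closure {v : X | ∃ k, P (a k) ≠ 0 ∧ v = ‖P (a k)‖⁻¹ • P (a k)} with hKdef
  have hK1 : ∀ x ∈ K, ‖x‖ = 1 := by
    have : IsClosed {x : X | ‖x‖ = 1} := isClosed_eq continuous_norm continuous_const
    refine fun x hx => closure_minimal ?_ this hx
    rintro v ⟨k, hk, rfl⟩
    simp [norm_smul, hk]
  have hK2 : ∀ x ∈ K, x ∈ U := by
    have : IsClosed (U : Set X) := Submodule.isClosed_topologicalClosure _
    refine fun x hx => closure_minimal ?_ this hx
    rintro v ⟨k, hk, rfl⟩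
    exact U.smul_of_tower_mem _ (Submodule.starProjection_apply_mem _ _)
  obtain ⟨t, ht⟩ := hK.elim_finite_subcover (fun i : S => {x : X | ⟪g i, x⟫_ℂ ≠ 0})
    (fun i => isOpen_ne_fun (by fun_prop) continuous_const) (by
      intro x hx
      by_contra hcon
      simp only [Set.mem_iUnion, Set.mem_ofPred_eq, not_exists, not_not] at hcon
      have h0 : x ∈ Uᗮ := by
        rw [hU, Submodule.orthogonal_closure]
        rw [Submodule.mem_orthogonal]
        intro u hu
        induction hu using Submodule.span_induction with
        | mem u hu => obtain ⟨i, hi, rfl⟩ := hu; exact hcon ⟨i, hi⟩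
        | zero => simp
        | add u v _ _ hu hv => rw [inner_add_left, hu, hv, add_zero]
        | smul c u _ hu => rw [inner_smul_left, hu, mul_zero]
      have : ⟪x, x⟫_ℂ = 0 := (Submodule.mem_orthogonal _ _).1 h0 x (hK2 x hx)
      rw [inner_self_eq_zero] at this
      have h1 := hK1 x hx
      rw [this, norm_zero] at h1
      exact zero_ne_one h1)
  obtain ⟨c, hc, hcK⟩ := hK.exists_forall_le' (f := fun x => ∑ i ∈ t, ‖⟪g i, x⟫_ℂ‖ ^ 2)
    (Continuous.continuousOn (by fun_prop)) (a := 0) (by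
      intro x hx
      obtain ⟨i, hi⟩ := Set.mem_iUnion.1 (ht hx)
      obtain ⟨hit, hix⟩ := Set.mem_iUnion.1 hi
      exact Finset.sum_pos' (fun _ _ => by positivity) ⟨i, hit, by
        have : ⟪g i, x⟫_ℂ ≠ 0 := hix
        positivity⟩)
  refine ⟨c⁻¹, t.map (Function.Embedding.subtype _), by positivity, ?_, ?_⟩
  · intro i hi
    obtain ⟨j, _, rfl⟩ := Finset.mem_map.1 hi
    exact j.2
  · intro k
    rw [Finset.sum_map]
    by_cases h0 : P (a k) = 0
    · rw [h0]
      have : 0 ≤ c⁻¹ := by positivity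
      simp only [norm_zero, ne_eq, OfNat.ofNat_ne_zero, not_false_eq_true, zero_pow]
      positivity
    · have h1 := hcK (‖P (a k)‖⁻¹ • P (a k)) (subset_closure ⟨k, h0, rfl⟩)
      have hpos : 0 < ‖P (a k)‖ := norm_pos_iff.2 h0
      have h2 : ∀ i : S, ‖⟪g i, ‖P (a k)‖⁻¹ • P (a k)⟫_ℂ‖ ^ 2
          = (‖P (a k)‖ ^ 2)⁻¹ * ‖⟪g i, a k⟫_ℂ‖ ^ 2 := by
        intro i
        rw [RCLike.real_smul_eq_coe_smul (K := ℂ), inner_smul_right, ← hsym,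
          Submodule.starProjection_eq_self_iff.2 (hgU i i.2), norm_mul, mul_pow]
        simp
      simp only [h2, ← Finset.mul_sum] at h1
      rw [inv_mul_eq_div, le_div_iff₀ (by positivity)] at h1
      rw [inv_mul_eq_div, le_div_iff₀ hc, mul_comm]
      exact h1

/-- One orthogonality relation, estimated by Cauchy–Schwarz. -/
theorem key_est {N : ℕ} {Λ : Set ℕ} [DecidablePred (· ∈ Λ)]
    (f : H2 X) (hspec : spec f ⊆ Λ) (g : H2 X)
    (hg : ∀ k, ⟪g, bshift^[N * k] f⟫_ℂ = 0) (β : ℕ → ℝ≥0∞)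
    (hβ : ∀ n i, i % N = n % N → ‖⟪g i, f n⟫_ℂ‖ₑ ≤ β n * ‖g i‖ₑ)
    (n i : ℕ) (hn : n ∈ Λ) (hin : i % N = n % N) (hile : i ≤ n)
    (hgap : ∀ n' ∈ Λ, n' < n → n' + i < n) :
    ‖⟪g i, f n⟫_ℂ‖ₑ ^ 2 ≤ (∑' d, β (n + (d + 1)) ^ 2) *
      ∑' d, (if n ∈ Λ ∧ n + (d + 1) ∈ Λ then ‖g (i + (d + 1))‖ₑ ^ 2 else 0) := by
  obtain ⟨k, hk⟩ : ∃ k, n = i + N * k := by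
    obtain ⟨k, hk⟩ := (Nat.modEq_iff_dvd' hile).1 hin
    exact ⟨k, by omega⟩
  have hs := lp.hasSum_inner (𝕜 := ℂ) g (bshift^[N * k] f)
  rw [hg k] at hs
  simp only [bshift_iter] at hs
  have hsum := hs.summable
  have h1 := hsum.sum_add_tsum_nat_add (i + 1)
  rw [hs.tsum_eq, Finset.sum_range_succ, Finset.sum_eq_zero, zero_add] at h1
  · have h2 : ⟪g i, f n⟫_ℂ = - ∑' d, ⟪g (i + (d + 1)), f (n + (d + 1))⟫_ℂ := by
      rw [← hk] at h1
      rw [eq_neg_iff_add_eq_zero, ← h1]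
      congr 1
      refine tsum_congr fun d => ?_
      have e1 : d + (i + 1) = i + (d + 1) := by ring
      have e2 : i + (d + 1) + N * k = n + (d + 1) := by rw [hk]; ring
      rw [e1, e2]
    have h3 : ‖⟪g i, f n⟫_ℂ‖ₑ ≤ ∑' d, β (n + (d + 1)) *
        (if n ∈ Λ ∧ n + (d + 1) ∈ Λ then ‖g (i + (d + 1))‖ₑ else 0) := by
      rw [h2, enorm_neg]
      refine enorm_tsum_le_tsum_enorm.trans (ENNReal.tsum_le_tsum fun d => ?_)
      by_cases hd : n + (d + 1) ∈ Λ
      · rw [if_pos ⟨hn, hd⟩]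
        exact hβ _ _ (Nat.ModEq.add_right _ hin)
      · have : f (n + (d + 1)) = 0 := by
          by_contra hne
          exact hd (hspec hne)
        simp [this]
    refine (pow_le_pow_left' h3 2).trans ((enn_cs _ _).trans (le_of_eq ?_))
    congr 1
    refine tsum_congr fun d => ?_
    split_ifs <;> simp
  · intro j hj
    have hj' := Finset.mem_range.1 hj
    have : f (j + N * k) = 0 := by
      by_contra hne
      have := hgap _ (hspec hne) (by omega)
      omega
    rw [this, inner_zero_right]

open Classical in
theorem core [CompleteSpace X] {N : ℕ} (hN : 1 ≤ N) {Λ : Set ℕ} (hΛ : HadLac Λ)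
    (f : H2 X) (hspec : spec f ⊆ Λ) (hcrc : CRC fun k : ℕ => f k) (g : H2 X)
    (hg : ∀ k, ⟪g, bshift^[N * k] f⟫_ℂ = 0) :
    ∃ m, ∀ n ≥ m, ∀ i, i % N = n % N → ⟪g i, f n⟫_ℂ = 0 := by
  choose C I hC hI hCI using fun r : ℕ =>
    compact_step (fun k : ℕ => f k) hcrc {i | i % N = r} (fun i => g i)
  set P : ℕ → X →L[ℂ] X := fun r => (Submodule.span ℂ
    ((fun i => g i) '' {i | i % N = r})).topologicalClosure.starProjection with hP
  set β : ℕ → ℝ≥0∞ := fun n => ‖P (n % N) (f n)‖ₑ with hβdef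
  have hin : ∀ n i, i % N = n % N → ⟪g i, f n⟫_ℂ = ⟪g i, P (n % N) (f n)⟫_ℂ := by
    intro n i hi
    have hgU : g i ∈ (Submodule.span ℂ
        ((fun i => g i) '' {i | i % N = n % N})).topologicalClosure :=
      Submodule.le_topologicalClosure _ (Submodule.subset_span ⟨i, hi, rfl⟩)
    have := Submodule.starProjection_inner_eq_zero (f n) (g i) hgU
    rw [← inner_conj_symm, map_eq_zero, inner_sub_right, sub_eq_zero] at this
    exact this
  have hβ : ∀ n i, i % N = n % N → ‖⟪g i, f n⟫_ℂ‖ₑ ≤ β n * ‖g i‖ₑ := by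
    intro n i hi
    rw [hin n i hi, mul_comm]
    have := norm_inner_le_norm (𝕜 := ℂ) (g i) (P (n % N) (f n))
    simp only [hβdef, enorm_eq_nnnorm]
    exact_mod_cast this
  set C0 : ℝ := ∑ r ∈ Finset.range N, C r with hC0
  set J : Finset ℕ := (Finset.range N).biUnion I with hJ
  set L : ℕ := J.sup id with hL
  have hIL : ∀ n, ∀ i ∈ I (n % N), i ≤ L := by
    intro n i hi
    exact Finset.le_sup (f := id) (Finset.mem_biUnion.2
      ⟨n % N, Finset.mem_range.2 (Nat.mod_lt _ hN), hi⟩)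
  have hCle : ∀ n, β n ^ 2 ≤ ENNReal.ofReal C0 * ∑ i ∈ I (n % N), ‖⟪g i, f n⟫_ℂ‖ₑ ^ 2 := by
    intro n
    have h1 := hCI (n % N) n
    have h2 : C (n % N) ≤ C0 := Finset.single_le_sum (f := C) (fun r _ => hC r)
      (Finset.mem_range.2 (Nat.mod_lt _ hN))
    have h3 : ‖P (n % N) (f n)‖ ^ 2 ≤ C0 * ∑ i ∈ I (n % N), ‖⟪g i, f n⟫_ℂ‖ ^ 2 :=
      h1.trans (mul_le_mul_of_nonneg_right h2 (by positivity))
    have h4 := ENNReal.ofReal_le_ofReal h3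
    rw [ENNReal.ofReal_mul ((hC _).trans h2), ENNReal.ofReal_sum_of_nonneg
      (s := I (n % N)) (f := fun i => ‖⟪g i, f n⟫_ℂ‖ ^ 2) (fun _ _ => by positivity)] at h4
    simpa only [ENNReal.ofReal_pow (norm_nonneg _), ofReal_norm] using h4
  set h : ℕ → ℝ≥0∞ := fun n => ∑ i ∈ Finset.range (L + 1), ∑' d,
    (if n ∈ Λ ∧ n + (d + 1) ∈ Λ then ‖g (i + (d + 1))‖ₑ ^ 2 else 0) with hh
  have hhsum : ∑' n, h n ≠ ∞ := by
    rw [hh, Summable.tsum_finsetSum (fun _ _ => ENNReal.summable)]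
    refine ENNReal.sum_ne_top.2 fun i _ => lac_pair hΛ (fun d => ‖g (i + (d + 1))‖ₑ ^ 2) ?_
    refine ne_top_of_le_ne_top (h2_enn g) ?_
    exact ENNReal.tsum_comp_le_tsum_of_injective (f := fun d : ℕ => i + (d + 1))
      (fun a b hab => by simpa using hab) (fun n => ‖g n‖ₑ ^ 2)
  have hβsum : ∑' n, β n ^ 2 ≠ ∞ := by
    refine ne_top_of_le_ne_top (h2_enn f) (ENNReal.tsum_le_tsum fun n => ?_)
    gcongr
    have := Submodule.norm_starProjection_apply_le (Submodule.span ℂ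
      ((fun i => g i) '' {i | i % N = n % N})).topologicalClosure (f n)
    simp only [hβdef, enorm_eq_nnnorm]
    exact_mod_cast this
  obtain ⟨m0, hm0⟩ := lac_gap hΛ L
  have htend : Filter.Tendsto (fun m => ENNReal.ofReal C0 * ∑' k, h (k + m)) Filter.atTop
      (nhds 0) := by
    have := ENNReal.Tendsto.const_mul (ENNReal.tendsto_sum_nat_add h hhsum)
      (Or.inr (ENNReal.ofReal_ne_top (r := C0)))
    simpa using this
  obtain ⟨m1, hm1⟩ := Filter.eventually_atTop.1 (htend.eventually (gt_mem_nhds zero_lt_one))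
  set m := max (max m0 L) m1 with hm
  have hsmall := hm1 m (le_max_right _ _)
  set B := ∑' k, β (k + m) ^ 2 with hB
  have hBtop : B ≠ ∞ := ne_top_of_le_ne_top hβsum
    (ENNReal.tsum_comp_le_tsum_of_injective (add_left_injective m) (fun n => β n ^ 2))
  have hpt : ∀ n, m ≤ n → β n ^ 2 ≤ ENNReal.ofReal C0 * (B * h n) := by
    intro n hmn
    by_cases hn : n ∈ Λ
    · refine (hCle n).trans ?_
      gcongr
      rw [hh, Finset.mul_sum]
      refine (Finset.sum_le_sum (f := fun i => ‖⟪g i, f n⟫_ℂ‖ₑ ^ 2) (g := fun i => B * ∑' d,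
        (if n ∈ Λ ∧ n + (d + 1) ∈ Λ then ‖g (i + (d + 1))‖ₑ ^ 2 else 0)) ?_).trans
        (Finset.sum_le_sum_of_subset ?_)
      · intro i hi
        have hiL := hIL n i hi
        have hLm : L ≤ m := (le_max_right _ _).trans (le_max_left _ _)
        refine (key_est f hspec g hg β hβ n i hn (hI _ i hi) (by omega) ?_).trans ?_
        · intro n' hn' hlt
          have := hm0 n hn (((le_max_left _ _).trans (le_max_left _ _)).trans hmn) n' hn' hlt
          omega
        · gcongr
          have := ENNReal.tsum_comp_le_tsum_of_injective (f := fun d : ℕ => (n - m) + (d + 1))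
            (fun a b hab => by simpa using hab) (fun k => β (k + m) ^ 2)
          refine le_trans (le_of_eq ?_) this
          refine tsum_congr fun d => ?_
          congr 2
          omega
      · intro i hi
        exact Finset.mem_range.2 (Nat.lt_succ_of_le (hIL n i hi))
    · have : f n = 0 := by
        by_contra hne
        exact hn (hspec hne)
      simp [hβdef, this]
  have hBle : B ≤ (ENNReal.ofReal C0 * ∑' k, h (k + m)) * B := by
    calc B ≤ ∑' k, ENNReal.ofReal C0 * (B * h (k + m)) :=
          ENNReal.tsum_le_tsum fun k => hpt _ (Nat.le_add_left _ _)
      _ = _ := by rw [ENNReal.tsum_mul_left, ENNReal.tsum_mul_left]; ring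
  have hB0 : B = 0 := by
    by_contra hne
    have := ENNReal.mul_lt_mul_left hne hBtop hsmall
    rw [one_mul] at this
    exact absurd hBle (not_le.2 this)
  refine ⟨m, fun n hn i hi => ?_⟩
  have h0 := ENNReal.tsum_eq_zero.1 hB0 (n - m)
  rw [Nat.sub_add_cancel hn] at h0
  have h1 : β n = 0 := by simpa using h0
  have h2 := hβ n i hi
  rw [h1, zero_mul] at h2
  simpa using h2

/-- A lacunary series with c.r.c. coefficients is cyclic for `S*^N` iff for every `m` the
closed span in `X^N` of the block vectors `(f̂(Nk), …, f̂(Nk+N−1))`, `k ≥ m`, is `X^N`. -/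
theorem lacunary_cyclic_pow_iff {X : Type*} [NormedAddCommGroup X] [InnerProductSpace ℂ X] [CompleteSpace X]
    [TopologicalSpace.SeparableSpace X]
    (N : ℕ) (hN : 1 ≤ N)
    (Λ : Set ℕ) (hΛ : HadLac Λ) (hΛinf : Λ.Infinite)
    (f : H2 X) (hspec : spec f ⊆ Λ) (hcrc : CRC fun k : ℕ => f k) :
    EfPow f N = ⊤ ↔
      ∀ m : ℕ,
        (Submodule.span ℂ {v : PiLp 2 fun _ : Fin N => X |
            ∃ k ≥ m, v = fun i : Fin N => f (N * k + i)}).topologicalClosure = ⊤ := by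
  have horth : ∀ g : H2 X, g ∈ (Submodule.span ℂ {g : H2 X | ∃ k : ℕ, g = bshift^[N * k] f})ᗮ ↔
      ∀ k, ⟪g, bshift^[N * k] f⟫_ℂ = 0 := by
    intro g
    rw [Submodule.mem_orthogonal']
    constructor
    · intro h k
      exact h _ (Submodule.subset_span ⟨k, rfl⟩)
    · intro h u hu
      induction hu using Submodule.span_induction with
      | mem u hu => obtain ⟨k, rfl⟩ := hu; exact h k
      | zero => simp
      | add u v _ _ hu hv => rw [inner_add_right, hu, hv, add_zero]
      | smul c u _ hu => rw [inner_smul_right, hu, mul_zero]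
  have horth2 : ∀ (m : ℕ) (w : PiLp 2 fun _ : Fin N => X),
      w ∈ (Submodule.span ℂ {v : PiLp 2 fun _ : Fin N => X |
            ∃ k ≥ m, v = fun i : Fin N => f (N * k + i)})ᗮ ↔
      ∀ k ≥ m, ∑ i : Fin N, ⟪w i, f (N * k + i)⟫_ℂ = 0 := by
    intro m w
    rw [Submodule.mem_orthogonal']
    constructor
    · intro h k hk
      have := h (WithLp.toLp 2 fun i : Fin N => f (N * k + i))
        (Submodule.subset_span ⟨k, hk, rfl⟩)
      rwa [PiLp.inner_apply] at this
    · intro h u hu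
      induction hu using Submodule.span_induction with
      | mem u hu =>
        obtain ⟨k, hk, hu⟩ := hu
        rw [PiLp.inner_apply, hu]
        exact h k hk
      | zero => simp
      | add u v _ _ hu hv => rw [inner_add_right, hu, hv, add_zero]
      | smul c u _ hu => rw [inner_smul_right, hu, mul_zero]
  unfold EfPow
  simp only [Submodule.topologicalClosure_eq_top_iff]
  constructor
  · intro h m
    rw [Submodule.eq_bot_iff]
    intro w hw
    rw [horth2] at hw
    set g : H2 X := ∑ i : Fin N, lp.single 2 (N * m + i) (w i) with hg
    have hg0 : g ∈ (Submodule.span ℂ {g : H2 X | ∃ k : ℕ, g = bshift^[N * k] f})ᗮ := by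
      rw [horth]
      intro k
      rw [hg, sum_inner, ← hw (m + k) (Nat.le_add_right _ _)]
      refine Finset.sum_congr rfl fun i _ => ?_
      rw [lp.inner_single_left, bshift_iter,
        show N * m + (i : ℕ) + N * k = N * (m + k) + i by ring]
    rw [h, Submodule.mem_bot] at hg0
    have hwi : ∀ i : Fin N, ⟪w i, w i⟫_ℂ = 0 := by
      intro i
      have h1 : ⟪g, lp.single 2 (N * m + i) (w i)⟫_ℂ = 0 := by rw [hg0, inner_zero_left]
      rw [hg, sum_inner, Finset.sum_eq_single i] at h1
      · rw [lp.inner_single_left, lp.single_apply_self] at h1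
        exact h1
      · intro j _ hj
        rw [lp.inner_single_left, lp.single_apply_ne, inner_zero_right]
        intro hij
        apply hj
        ext
        omega
      · simp
    ext i
    simpa using hwi i
  · intro h
    rw [Submodule.eq_bot_iff]
    intro g hg
    rw [horth] at hg
    obtain ⟨m, hm⟩ := core hN hΛ f hspec hcrc g hg
    have hz : ∀ l : ℕ, ∀ i : Fin N, g (N * l + i) = 0 := by
      intro l
      have hmem : (WithLp.toLp 2 fun i : Fin N => g (N * l + i)) ∈
          (Submodule.span ℂ {v : PiLp 2 fun _ : Fin N => X |
            ∃ k ≥ m, v = fun i : Fin N => f (N * k + i)})ᗮ := by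
        rw [horth2]
        intro k hk
        refine Finset.sum_eq_zero fun i _ => ?_
        refine hm _ ?_ _ ?_
        · nlinarith
        · simp
      rw [h m, Submodule.mem_bot] at hmem
      intro i
      exact congrArg (fun v : PiLp 2 fun _ : Fin N => X => v i) hmem
    ext n
    have := hz (n / N) ⟨n % N, Nat.mod_lt _ hN⟩
    simpa [Nat.div_add_mod] using this

end
end
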